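/- Let T be a rooted tree which is homogeneous of order γ (γ ≥ 1) and let B be the backward shift on 𝓛. Then for every n ∈ ℕ, n ≥ 1, the operator norm of the n-th power Bⁿ equals n + 1 if γ = 1, and equals (2n+1)γⁿ − 2nγ^{n−1} if γ ≥ 2. -/

import Mathlib

/-!
Write `Bᵐ⁺¹f(v) = ∑ Bᵐf(c)` over the children `c` of `v`. If `‖f‖ ≤ 1` on a homogeneous tree of
order `γ`, two inductions on `m` along this identity give

* `‖Bᵐf(v) - γᵐ f(v)‖ ≤ m γᵐ` (`norm_bshift_iterate_sub_le`), and
* `‖Bᵐ⁺¹f(v) - Bᵐf(v) - (γᵐ⁺¹ - γᵐ) f(v)‖ ≤ γᵐ⁺¹ + m (γᵐ⁺¹ - γᵐ)`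
  (`norm_bshift_iterate_succ_sub_le`).

The first bounds `(Bⁿf)'` at the root by `(n + 1) γⁿ`. For a vertex `v` with parent `p ≠ v`, the sum
`Bⁿf(p)` splits into `Bⁿ⁻¹f(v)` and the contributions of the `γ - 1` siblings of `v`; since the
multiples of `f(p)` cancel, the two estimates bound `(Bⁿf)'(v)` by `(2n + 1) γⁿ - 2n γⁿ⁻¹`. The
norm is therefore at most the larger of the two numbers, which is the first one if `γ = 1` and the
second one if `γ ≥ 2`.

Both bounds are attained. At the root, take `f(x) = |x| + 1`. For the other one, fix a child `v` of
the root and let `f(x) = |x|` on the sector of `v` and `f(x) = -|x|` off it. Powers of `B` are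
explicit on such functions, because `f` changes by a constant from a vertex to each of its children
(`bshift_iterate_eq_of_step`).
-/

open scoped ENNReal NNReal

/-- A rooted, countably infinite, locally finite tree, encoded via its parent
function and depth function. Every non-root vertex `v` has a parent `par v`
one level closer to the root; iterating the parent function from any vertex
eventually reaches the root (this is forced by the depth function decreasing). -/
structure LipTree where
  V : Type
  countable : Countable V
  infinite : Infinite V
  root : V
  par : V → V
  par_root : par root = root
  depth : V → ℕ
  depth_root : depth root = 0
  depth_par : ∀ v, v ≠ root → depth v = depth (par v) + 1
  locFin : ∀ v : V, {w : V | w ≠ root ∧ par w = v}.Finite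

namespace LipTree

variable (T : LipTree)

/-- The set of children of a vertex. -/
def children (v : T.V) : Set T.V := {w | w ≠ T.root ∧ T.par w = v}

/-- `γ(v)`: the number of children of `v`. -/
noncomputable def gamma (v : T.V) : ℕ := (T.locFin v).toFinset.card

open Classical in
/-- `f'`, the "derivative" of `f` : `f'(o) = f(o)`, `f'(v) = f(v) - f(par v)` otherwise. -/
noncomputable def deriv (f : T.V → ℂ) : T.V → ℂ :=
  fun v => if v = T.root then f v else f v - f (T.par v)

/-- `‖f‖ = sup_{v} |f'(v)|`, valued in `[0,∞]`. -/
noncomputable def lnorm (f : T.V → ℂ) : ℝ≥0∞ := ⨆ v, (‖T.deriv f v‖₊ : ℝ≥0∞)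

/-- The Lipschitz space `𝓛`. -/
def Lip : Set (T.V → ℂ) := {f | T.lnorm f < ⊤}

/-- The little Lipschitz space `𝓛₀`: members of `𝓛` with `f'(v) → 0` as `|v| → ∞`. -/
def Lip0 : Set (T.V → ℂ) :=
  {f | T.lnorm f < ⊤ ∧
    Filter.Tendsto (T.deriv f) (Filter.comap T.depth Filter.atTop) (nhds 0)}

open Classical in
/-- The forward shift `S`. -/
noncomputable def fshift (f : T.V → ℂ) : T.V → ℂ :=
  fun v => if v = T.root then 0 else f (T.par v)

/-- The backward shift `B`: `(Bf)(v) = Σ_{w child of v} f(w)`. -/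
noncomputable def bshift (f : T.V → ℂ) : T.V → ℂ :=
  fun v => ∑ w ∈ (T.locFin v).toFinset, f w

/-- `T` is leafless: every vertex has a child. -/
def Leafless : Prop := ∀ v : T.V, (T.children v).Nonempty

/-- The sector (subtree) determined by `v`: `v` together with all its descendants. -/
def sector (v : T.V) : Set T.V := {w | ∃ n : ℕ, T.par^[n] w = v}

/-- `T` is homogeneous by sectors at level `N`. -/
def HomBySectors (N : ℕ) : Prop :=
  ∀ v : T.V, T.depth v = N → ∀ w ∈ T.sector v, T.gamma w = T.gamma v

/-- `T` is homogeneous of order `γ`. -/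
def Homogeneous (γ : ℕ) : Prop := ∀ v : T.V, T.gamma v = γ

/-- The operator norm of `Bⁿ` on `𝓛`: `sup { ‖Bⁿ f‖ : ‖f‖ ≤ 1 }`. -/
noncomputable def opNormBpow (n : ℕ) : ℝ≥0∞ :=
  ⨆ f ∈ {f : T.V → ℂ | T.lnorm f ≤ 1}, T.lnorm (T.bshift^[n] f)

/-- The operator norm of `B` on `𝓛`: `sup { ‖B f‖ : ‖f‖ ≤ 1 }`. -/
noncomputable def opNormB : ℝ≥0∞ :=
  ⨆ f ∈ {f : T.V → ℂ | T.lnorm f ≤ 1}, T.lnorm (T.bshift f)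

/-- The quantity `Λ = sup_{v ≠ o} (γ(v) + γ(par v) - 1 + |γ(v) - 1| + |γ(v) - γ(par v)|·|v|)`. -/
noncomputable def Lambda : ℝ≥0∞ :=
  ⨆ v ∈ {v : T.V | v ≠ T.root},
    ((T.gamma v + T.gamma (T.par v) - 1
      + ((T.gamma v : ℤ) - 1).natAbs
      + ((T.gamma v : ℤ) - (T.gamma (T.par v) : ℤ)).natAbs * T.depth v : ℕ) : ℝ≥0∞)

/-- An operator `A` on `𝓛₀` is hypercyclic if some orbit `{Aⁿ f}` is dense in `𝓛₀`. -/
def Hypercyclic (A : (T.V → ℂ) → (T.V → ℂ)) : Prop :=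
  ∃ f ∈ T.Lip0, ∀ g ∈ T.Lip0, ∀ ε : ℝ≥0∞, 0 < ε →
    ∃ n : ℕ, T.lnorm (A^[n] f - g) < ε

end LipTree

namespace LipTree

lemma mem_toFinset_locFin {T : LipTree} {v w : T.V} :
    w ∈ (T.locFin v).toFinset ↔ w ≠ T.root ∧ T.par w = v := by
  simp

lemma bshift_iterate_succ (T : LipTree) (m : ℕ) (f : T.V → ℂ) (v : T.V) :
    T.bshift^[m + 1] f v = ∑ c ∈ (T.locFin v).toFinset, T.bshift^[m] f c := by
  rw [Function.iterate_succ_apply']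
  rfl

lemma Homogeneous.card_children {T : LipTree} {γ : ℕ} (hom : T.Homogeneous γ) (v : T.V) :
    (T.locFin v).toFinset.card = γ := hom v

lemma deriv_root (T : LipTree) (f : T.V → ℂ) : T.deriv f T.root = f T.root := by
  simp [deriv]

lemma deriv_of_ne_root {T : LipTree} (f : T.V → ℂ) {v : T.V} (hv : v ≠ T.root) :
    T.deriv f v = f v - f (T.par v) := by
  simp [deriv, hv]

lemma lnorm_le_natCast_iff {T : LipTree} {f : T.V → ℂ} {N : ℕ} :
    T.lnorm f ≤ (N : ℝ≥0∞) ↔ ∀ v, ‖T.deriv f v‖ ≤ N := by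
  rw [lnorm, iSup_le_iff]
  refine forall_congr' fun v => ?_
  rw [← ENNReal.coe_natCast, ENNReal.coe_le_coe, ← NNReal.coe_le_coe]
  simp

lemma natCast_le_lnorm {T : LipTree} {f : T.V → ℂ} {N : ℕ} (v : T.V)
    (h : (N : ℝ) ≤ ‖T.deriv f v‖) : (N : ℝ≥0∞) ≤ T.lnorm f := by
  refine le_trans ?_ (le_iSup (fun v => (‖T.deriv f v‖₊ : ℝ≥0∞)) v)
  rw [← ENNReal.coe_natCast, ENNReal.coe_le_coe, ← NNReal.coe_le_coe]
  simpa using h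

/-- A bound for a sum over the children of `v` from a bound for the summands. -/
lemma Homogeneous.norm_sum_children_le {T : LipTree} {γ : ℕ} (hom : T.Homogeneous γ) (v : T.V)
    (F : T.V → ℂ) (C : ℝ) (h : ∀ c, c ≠ T.root → T.par c = v → ‖F c‖ ≤ C) :
    ‖∑ c ∈ (T.locFin v).toFinset, F c‖ ≤ γ * C := by
  refine (norm_sum_le_of_le (s := (T.locFin v).toFinset) (n := fun _ => C) fun c hc => ?_).trans ?_
  · exact h c (mem_toFinset_locFin.1 hc).1 (mem_toFinset_locFin.1 hc).2
  · rw [Finset.sum_const, hom.card_children, nsmul_eq_mul]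

/-- `γᵐ f(v)` is the value `Bᵐf(v)` would have if `f` were constant below `v`; a function of norm
at most `1` changes by at most `m` over `m` generations. -/
lemma norm_bshift_iterate_sub_le {T : LipTree} {γ : ℕ} (hom : T.Homogeneous γ) {f : T.V → ℂ}
    (hf : ∀ v, ‖T.deriv f v‖ ≤ 1) (m : ℕ) (v : T.V) :
    ‖T.bshift^[m] f v - (γ : ℂ) ^ m * f v‖ ≤ m * (γ : ℝ) ^ m := by
  induction m generalizing v with
  | zero => simp
  | succ m ih =>
    have key : T.bshift^[m + 1] f v - (γ : ℂ) ^ (m + 1) * f v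
        = ∑ c ∈ (T.locFin v).toFinset,
          ((T.bshift^[m] f c - (γ : ℂ) ^ m * f c) + (γ : ℂ) ^ m * (f c - f v)) := by
      have : ∀ c, (T.bshift^[m] f c - (γ : ℂ) ^ m * f c) + (γ : ℂ) ^ m * (f c - f v)
          = T.bshift^[m] f c - (γ : ℂ) ^ m * f v := fun c => by ring
      simp only [this]
      rw [Finset.sum_sub_distrib, ← bshift_iterate_succ, Finset.sum_const, hom.card_children,
        nsmul_eq_mul]
      ring
    rw [key]
    refine (hom.norm_sum_children_le v _ (m * (γ : ℝ) ^ m + (γ : ℝ) ^ m) ?_).trans (le_of_eq ?_)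
    · intro c hc hcv
      refine (norm_add_le _ _).trans (add_le_add (ih c) ?_)
      have h1 := hf c
      rw [deriv_of_ne_root f hc, hcv] at h1
      rw [norm_mul, norm_pow, Complex.norm_natCast]
      exact mul_le_of_le_one_right (by positivity) h1
    · push_cast
      ring

/-- In terms of `f'`, the left-hand side is a combination of the values of `f'` at the proper
descendants of `v` in generations `1, …, m + 1`; the last generation contributes `γᵐ⁺¹` and each
of the `m` others `γᵐ⁺¹ - γᵐ`. -/
lemma norm_bshift_iterate_succ_sub_le {T : LipTree} {γ : ℕ} (hγ : 1 ≤ γ) (hom : T.Homogeneous γ)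
    {f : T.V → ℂ} (hf : ∀ v, ‖T.deriv f v‖ ≤ 1) (m : ℕ) (v : T.V) :
    ‖T.bshift^[m + 1] f v - T.bshift^[m] f v - ((γ : ℂ) ^ (m + 1) - (γ : ℂ) ^ m) * f v‖
      ≤ (γ : ℝ) ^ (m + 1) + m * ((γ : ℝ) ^ (m + 1) - (γ : ℝ) ^ m) := by
  induction m generalizing v with
  | zero =>
    have h := norm_bshift_iterate_sub_le hom hf 1 v
    simp only [Function.iterate_zero, id, zero_add] at h ⊢
    convert h using 2 <;> push_cast <;> ring
  | succ m ih =>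
    have key : T.bshift^[m + 1 + 1] f v - T.bshift^[m + 1] f v
          - ((γ : ℂ) ^ (m + 1 + 1) - (γ : ℂ) ^ (m + 1)) * f v
        = ∑ c ∈ (T.locFin v).toFinset,
          ((T.bshift^[m + 1] f c - T.bshift^[m] f c - ((γ : ℂ) ^ (m + 1) - (γ : ℂ) ^ m) * f c)
            + ((γ : ℂ) ^ (m + 1) - (γ : ℂ) ^ m) * (f c - f v)) := by
      have : ∀ c, (T.bshift^[m + 1] f c - T.bshift^[m] f c
            - ((γ : ℂ) ^ (m + 1) - (γ : ℂ) ^ m) * f c)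
            + ((γ : ℂ) ^ (m + 1) - (γ : ℂ) ^ m) * (f c - f v)
          = T.bshift^[m + 1] f c - T.bshift^[m] f c - ((γ : ℂ) ^ (m + 1) - (γ : ℂ) ^ m) * f v :=
        fun c => by ring
      simp only [this]
      rw [Finset.sum_sub_distrib, Finset.sum_sub_distrib, ← bshift_iterate_succ,
        ← bshift_iterate_succ, Finset.sum_const, hom.card_children, nsmul_eq_mul]
      ring
    have hnn : (γ : ℝ) ^ m ≤ (γ : ℝ) ^ (m + 1) :=
      pow_le_pow_right₀ (by exact_mod_cast hγ) (Nat.le_succ m)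
    rw [key]
    refine (hom.norm_sum_children_le v _ ((γ : ℝ) ^ (m + 1)
      + m * ((γ : ℝ) ^ (m + 1) - (γ : ℝ) ^ m) + ((γ : ℝ) ^ (m + 1) - (γ : ℝ) ^ m)) ?_).trans
      (le_of_eq ?_)
    · intro c hc hcv
      refine (norm_add_le _ _).trans (add_le_add (ih c) ?_)
      have h1 := hf c
      rw [deriv_of_ne_root f hc, hcv] at h1
      have h2 : ‖(γ : ℂ) ^ (m + 1) - (γ : ℂ) ^ m‖ = (γ : ℝ) ^ (m + 1) - (γ : ℝ) ^ m := by
        have : (γ : ℂ) ^ (m + 1) - (γ : ℂ) ^ m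
            = (((γ : ℝ) ^ (m + 1) - (γ : ℝ) ^ m : ℝ) : ℂ) := by
          push_cast
          rfl
        rw [this, Complex.norm_real, Real.norm_of_nonneg (sub_nonneg.2 hnn)]
      rw [norm_mul, h2]
      exact mul_le_of_le_one_right (sub_nonneg.2 hnn) h1
    · push_cast
      ring

lemma norm_deriv_bshift_iterate_root_le {T : LipTree} {γ : ℕ} (hom : T.Homogeneous γ)
    {f : T.V → ℂ} (hf : ∀ v, ‖T.deriv f v‖ ≤ 1) (n : ℕ) :
    ‖T.deriv (T.bshift^[n] f) T.root‖ ≤ (n + 1) * (γ : ℝ) ^ n := by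
  rw [deriv_root]
  have h1 := norm_bshift_iterate_sub_le hom hf n T.root
  have h2 := hf T.root
  rw [deriv_root] at h2
  have h3 : ‖(γ : ℂ) ^ n * f T.root‖ ≤ (γ : ℝ) ^ n := by
    rw [norm_mul, norm_pow, Complex.norm_natCast]
    exact mul_le_of_le_one_right (by positivity) h2
  have h4 := norm_add_le (T.bshift^[n] f T.root - (γ : ℂ) ^ n * f T.root) ((γ : ℂ) ^ n * f T.root)
  rw [sub_add_cancel] at h4
  linarith

lemma norm_deriv_bshift_iterate_le {T : LipTree} {γ : ℕ} (hγ : 1 ≤ γ) (hom : T.Homogeneous γ)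
    {f : T.V → ℂ} (hf : ∀ v, ‖T.deriv f v‖ ≤ 1) (m : ℕ) {v : T.V} (hv : v ≠ T.root) :
    ‖T.deriv (T.bshift^[m + 1] f) v‖
      ≤ (2 * (m + 1) + 1) * (γ : ℝ) ^ (m + 1) - 2 * (m + 1) * (γ : ℝ) ^ m := by
  classical
  set p := T.par v with hp
  set s := (T.locFin p).toFinset.erase v with hs
  have hvp : v ∈ (T.locFin p).toFinset := mem_toFinset_locFin.2 ⟨hv, rfl⟩
  have hcard : s.card = γ - 1 := by
    rw [hs, Finset.card_erase_of_mem hvp, hom.card_children]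
  have hcardR : ((γ - 1 : ℕ) : ℝ) = γ - 1 := by
    push_cast [hγ]
    ring
  have hcardC : ((γ - 1 : ℕ) : ℂ) = γ - 1 := by
    push_cast [hγ]
    ring
  have hder : ∀ w, w ≠ T.root → T.par w = p → ‖f w - f p‖ ≤ 1 := by
    intro w hw hwp
    have := hf w
    rwa [deriv_of_ne_root f hw, hwp] at this
  have key : T.deriv (T.bshift^[m + 1] f) v
      = (T.bshift^[m + 1] f v - T.bshift^[m] f v - ((γ : ℂ) ^ (m + 1) - (γ : ℂ) ^ m) * f v)
        + (((γ - 1 : ℕ) : ℂ) * (γ : ℂ) ^ m * (f v - f p)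
        - ∑ c ∈ s, ((T.bshift^[m] f c - (γ : ℂ) ^ m * f c) + (γ : ℂ) ^ m * (f c - f p))) := by
    have : ∀ c, (T.bshift^[m] f c - (γ : ℂ) ^ m * f c) + (γ : ℂ) ^ m * (f c - f p)
        = T.bshift^[m] f c - (γ : ℂ) ^ m * f p := fun c => by ring
    simp only [this]
    rw [deriv_of_ne_root _ hv, ← hp, bshift_iterate_succ T m f p, ← Finset.add_sum_erase _ _ hvp,
      Finset.sum_sub_distrib, Finset.sum_const, hcard, nsmul_eq_mul, hcardC]
    ring
  have h1 := norm_bshift_iterate_succ_sub_le hγ hom hf m v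
  have h2 : ‖((γ - 1 : ℕ) : ℂ) * (γ : ℂ) ^ m * (f v - f p)‖ ≤ (γ - 1) * (γ : ℝ) ^ m := by
    rw [norm_mul, norm_mul, norm_pow, Complex.norm_natCast, Complex.norm_natCast, hcardR]
    refine mul_le_of_le_one_right ?_ (hder v hv rfl)
    rw [← hcardR]
    positivity
  have h3 : ‖∑ c ∈ s, ((T.bshift^[m] f c - (γ : ℂ) ^ m * f c) + (γ : ℂ) ^ m * (f c - f p))‖
      ≤ (γ - 1) * (m * (γ : ℝ) ^ m + (γ : ℝ) ^ m) := by
    refine (norm_sum_le_of_le (n := fun _ => m * (γ : ℝ) ^ m + (γ : ℝ) ^ m) _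
      fun c hc => ?_).trans ?_
    · refine (norm_add_le _ _).trans (add_le_add (norm_bshift_iterate_sub_le hom hf m c) ?_)
      obtain ⟨hc1, hc2⟩ := mem_toFinset_locFin.1 (Finset.mem_of_mem_erase hc)
      rw [norm_mul, norm_pow, Complex.norm_natCast]
      exact mul_le_of_le_one_right (by positivity) (hder c hc1 hc2)
    · rw [Finset.sum_const, hcard, nsmul_eq_mul, hcardR]
  rw [key]
  refine (norm_add_le _ _).trans ((add_le_add h1 ((norm_sub_le _ _).trans
    (add_le_add h2 h3))).trans (le_of_eq ?_))
  ring

/-- If, on a set of vertices `P` closed under passing to children, `f` increases by `δ` from a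
vertex to each of its children, then `Bᵐf(w)` is the sum of `γᵐ` equal terms. -/
lemma bshift_iterate_eq_of_step {T : LipTree} {γ : ℕ} (hom : T.Homogeneous γ) {f : T.V → ℂ}
    (P : T.V → Prop) (δ : ℂ) (hP : ∀ c, c ≠ T.root → P (T.par c) → P c)
    (hf : ∀ c, c ≠ T.root → P (T.par c) → f c = f (T.par c) + δ) (m : ℕ) (w : T.V) (hw : P w) :
    T.bshift^[m] f w = (γ : ℂ) ^ m * (f w + m * δ) := by
  induction m generalizing w with
  | zero => simp
  | succ m ih =>
    rw [bshift_iterate_succ, Finset.sum_congr rfl (g := fun _ => (γ : ℂ) ^ m * (f w + δ + m * δ)),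
      Finset.sum_const, hom.card_children, nsmul_eq_mul]
    · push_cast
      ring
    · intro c hc
      obtain ⟨hc1, rfl⟩ := mem_toFinset_locFin.1 hc
      rw [ih c (hP c hc1 hw), hf c hc1 hw]

lemma le_opNormBpow {T : LipTree} {n N : ℕ} {f : T.V → ℂ} (hf : ∀ v, ‖T.deriv f v‖ ≤ 1) (v : T.V)
    (h : (N : ℝ) ≤ ‖T.deriv (T.bshift^[n] f) v‖) : (N : ℝ≥0∞) ≤ T.opNormBpow n := by
  have hflip : T.lnorm f ≤ 1 := by
    have : T.lnorm f ≤ ((1 : ℕ) : ℝ≥0∞) := lnorm_le_natCast_iff.2 (by simpa using hf)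
    simpa using this
  exact (natCast_le_lnorm v h).trans
    (le_iSup₂ (f := fun (f : T.V → ℂ) (_ : f ∈ {f : T.V → ℂ | T.lnorm f ≤ 1}) =>
      T.lnorm (T.bshift^[n] f)) f hflip)

lemma opNormBpow_le {T : LipTree} {n N : ℕ}
    (h : ∀ f : T.V → ℂ, (∀ v, ‖T.deriv f v‖ ≤ 1) → ∀ v, ‖T.deriv (T.bshift^[n] f) v‖ ≤ N) :
    T.opNormBpow n ≤ (N : ℝ≥0∞) := by
  refine iSup₂_le fun f hf => lnorm_le_natCast_iff.2 (h f ?_)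
  have hflip : T.lnorm f ≤ ((1 : ℕ) : ℝ≥0∞) := by simpa using hf
  simpa using lnorm_le_natCast_iff.1 hflip

/-- The lower bound from the derivative at the root, attained by `f(x) = |x| + 1`. -/
lemma natCast_root_le_opNormBpow {T : LipTree} {γ : ℕ} (hom : T.Homogeneous γ) (n : ℕ) :
    (((n + 1) * γ ^ n : ℕ) : ℝ≥0∞) ≤ T.opNormBpow n := by
  have hstep : ∀ c, c ≠ T.root → ((T.depth c : ℂ) + 1) = ((T.depth (T.par c) : ℂ) + 1) + 1 := by
    intro c hc
    rw [T.depth_par c hc]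
    push_cast
    ring
  refine le_opNormBpow (f := fun x => (T.depth x : ℂ) + 1) (fun v => ?_) T.root ?_
  · by_cases hv : v = T.root
    · rw [hv, deriv_root, T.depth_root]
      simp
    · rw [deriv_of_ne_root _ hv, hstep v hv]
      simp
  · rw [deriv_root, bshift_iterate_eq_of_step hom (fun _ => True) 1 (fun _ _ _ => trivial)
      (fun c hc _ => hstep c hc) n T.root trivial, T.depth_root]
    have : (γ : ℂ) ^ n * (((0 : ℕ) : ℂ) + 1 + n * 1) = (((n + 1) * γ ^ n : ℕ) : ℂ) := by
      push_cast
      ring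
    rw [this, Complex.norm_natCast]

/-- The lower bound from the derivative at a child `v` of the root, attained by the function equal
to the depth on the sector of `v` and to minus the depth off that sector. -/
lemma natCast_child_le_opNormBpow {T : LipTree} {γ : ℕ} (hγ : 1 ≤ γ) (hom : T.Homogeneous γ)
    (m : ℕ) :
    (((2 * (m + 1) + 1) * γ ^ (m + 1) - 2 * (m + 1) * γ ^ m : ℕ) : ℝ≥0∞)
      ≤ T.opNormBpow (m + 1) := by
  classical
  obtain ⟨v, hvmem⟩ : (T.locFin T.root).toFinset.Nonempty := by
    rw [← Finset.card_pos, hom.card_children]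
    exact hγ
  obtain ⟨hv, hvp⟩ := mem_toFinset_locFin.1 hvmem
  have hroot : T.root ∉ T.sector v := by
    rintro ⟨k, hk⟩
    exact hv (by rw [← hk, Function.iterate_fixed T.par_root])
  have hself : v ∈ T.sector v := ⟨0, rfl⟩
  have hin : ∀ c, T.par c ∈ T.sector v → c ∈ T.sector v := by
    rintro c ⟨k, hk⟩
    exact ⟨k + 1, hk⟩
  have hout : ∀ c, c ∈ T.sector v → c ≠ v → T.par c ∈ T.sector v := by
    rintro c ⟨k, hk⟩ hcv
    cases k with
    | zero => exact absurd hk hcv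
    | succ k => exact ⟨k, hk⟩
  set f : T.V → ℂ := fun x => if x ∈ T.sector v then (T.depth x : ℂ) else -(T.depth x : ℂ) with hf
  have hstep1 : ∀ c, c ≠ T.root → T.par c ∈ T.sector v → f c = f (T.par c) + 1 := by
    intro c hc h
    simp only [hf, hin c h, h, if_true]
    rw [T.depth_par c hc]
    push_cast
    ring
  -- The hypothesis is on `c`, not on `par c`, so that the siblings of `v` are covered but `v` is not.
  have hstep2 : ∀ c, c ≠ T.root → c ∉ T.sector v → f c = f (T.par c) + (-1) := by
    intro c hc h
    have hp : T.par c ∉ T.sector v := fun hcs => h (hin c hcs)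
    simp only [hf, h, hp, if_false]
    rw [T.depth_par c hc]
    push_cast
    ring
  have hfroot : f T.root = 0 := by
    simp [hf, T.depth_root]
  have hfv : f v = 1 := by
    simp [hf, hself, T.depth_par v hv, hvp, T.depth_root]
  have hder : ∀ x, ‖T.deriv f x‖ ≤ 1 := by
    intro x
    by_cases hx : x = T.root
    · rw [hx, deriv_root, hfroot]
      simp
    · rw [deriv_of_ne_root _ hx]
      by_cases hxs : x ∈ T.sector v
      · by_cases hxv : x = v
        · rw [hxv, hvp, hfroot, hfv]
          simp
        · rw [hstep1 x hx (hout x hxs hxv)]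
          simp
      · rw [hstep2 x hx hxs]
        simp
  have hB1 : ∀ k, T.bshift^[k] f v = (γ : ℂ) ^ k * (f v + k * 1) := fun k =>
    bshift_iterate_eq_of_step hom (· ∈ T.sector v) 1 (fun c _ h => hin c h) hstep1 k v hself
  -- The root is excluded because its child `v` lies in the sector.
  have hclosed : ∀ c, c ≠ T.root → (T.par c ≠ T.root ∧ T.par c ∉ T.sector v) →
      (c ≠ T.root ∧ c ∉ T.sector v) := by
    rintro c hc ⟨h1, h2⟩
    refine ⟨hc, fun h => h2 (hout c h ?_)⟩
    rintro rfl
    exact h1 hvp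
  have hB2 : ∀ k w, w ≠ T.root → w ∉ T.sector v →
      T.bshift^[k] f w = (γ : ℂ) ^ k * (f w + k * (-1)) := fun k w hw hws =>
    bshift_iterate_eq_of_step hom (fun x => x ≠ T.root ∧ x ∉ T.sector v) (-1) hclosed
      (fun c hc h => hstep2 c hc (hclosed c hc h).2) k w ⟨hw, hws⟩
  have hsib : ∑ c ∈ (T.locFin T.root).toFinset.erase v, T.bshift^[m] f c
      = ((γ : ℂ) - 1) * ((γ : ℂ) ^ m * (-1 + m * (-1))) := by
    rw [Finset.sum_congr rfl (g := fun _ => (γ : ℂ) ^ m * (-1 + m * (-1))), Finset.sum_const,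
      Finset.card_erase_of_mem hvmem, hom.card_children, nsmul_eq_mul]
    · push_cast [hγ]
      ring
    · intro c hc
      obtain ⟨hcv, hcmem⟩ := Finset.mem_erase.1 hc
      obtain ⟨hc1, hc2⟩ := mem_toFinset_locFin.1 hcmem
      have hcs : c ∉ T.sector v := fun h => hroot (hc2 ▸ hout c h hcv)
      rw [hB2 m c hc1 hcs, hstep2 c hc1 hcs, hc2, hfroot, zero_add]
  have hle : 2 * (m + 1) * γ ^ m ≤ (2 * (m + 1) + 1) * γ ^ (m + 1) :=
    Nat.mul_le_mul (Nat.le_succ _) (Nat.pow_le_pow_right hγ (Nat.le_succ m))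
  refine le_opNormBpow hder v (le_of_eq ?_)
  have : T.deriv (T.bshift^[m + 1] f) v
      = (((2 * (m + 1) + 1) * γ ^ (m + 1) - 2 * (m + 1) * γ ^ m : ℕ) : ℂ) := by
    rw [deriv_of_ne_root _ hv, hvp, bshift_iterate_succ T m f T.root,
      ← Finset.add_sum_erase _ _ hvmem, hsib, hB1, hB1, hfv, Nat.cast_sub hle]
    push_cast
    ring
  rw [this, Complex.norm_natCast]

/-- The two bounds of `(Bⁿf)'`, at the root and elsewhere, combined: the norm is at most any common
upper bound. -/
lemma opNormBpow_le_of_le {T : LipTree} {γ : ℕ} (hγ : 1 ≤ γ) (hom : T.Homogeneous γ) (m : ℕ)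
    {N : ℕ} (h1 : (m + 1 + 1) * γ ^ (m + 1) ≤ N)
    (h2 : (2 * (m + 1) + 1) * γ ^ (m + 1) ≤ N + 2 * (m + 1) * γ ^ m) :
    T.opNormBpow (m + 1) ≤ (N : ℝ≥0∞) := by
  refine opNormBpow_le fun f hf v => ?_
  by_cases hv : v = T.root
  · rw [hv]
    refine (norm_deriv_bshift_iterate_root_le hom hf (m + 1)).trans ?_
    exact_mod_cast h1
  · refine (norm_deriv_bshift_iterate_le hγ hom hf m hv).trans ?_
    rw [sub_le_iff_le_add]
    exact_mod_cast h2

end LipTree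

/-- on a homogeneous tree of order `γ ≥ 1`, for `n ≥ 1`,
`‖Bⁿ‖ = n + 1` if `γ = 1` and `‖Bⁿ‖ = (2n+1)γⁿ - 2nγ^{n-1}` if `γ ≥ 2`. -/
theorem opNormBpow_homogeneous (T : LipTree) (γ : ℕ) (hγ : 1 ≤ γ) (hom : T.Homogeneous γ)
    (n : ℕ) (hn : 1 ≤ n) :
    (γ = 1 → T.opNormBpow n = ((n + 1 : ℕ) : ℝ≥0∞)) ∧
    (2 ≤ γ → T.opNormBpow n = (((2 * n + 1) * γ ^ n - 2 * n * γ ^ (n - 1) : ℕ) : ℝ≥0∞)) := by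
  obtain ⟨m, rfl⟩ : ∃ m, n = m + 1 := ⟨n - 1, by omega⟩
  constructor
  · rintro rfl
    refine le_antisymm (LipTree.opNormBpow_le_of_le hγ hom m ?_ ?_) ?_
    · simp
    · simp only [one_pow]
      omega
    · simpa using LipTree.natCast_root_le_opNormBpow hom (m + 1)
  · intro h2
    rw [Nat.add_sub_cancel]
    refine le_antisymm (LipTree.opNormBpow_le_of_le hγ hom m ?_ ?_)
      (LipTree.natCast_child_le_opNormBpow hγ hom m)
    · -- The root gives the smaller bound exactly because `2 γᵐ ≤ γᵐ⁺¹`.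
      have h3 : (m + 1) * (2 * γ ^ m) ≤ (m + 1) * γ ^ (m + 1) := by
        rw [pow_succ']
        exact Nat.mul_le_mul le_rfl (Nat.mul_le_mul h2 le_rfl)
      refine Nat.le_sub_of_add_le ?_
      nlinarith
    · omega
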